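/- Let (Z, τ) be a zero-dimensional Polish space, 1 ≤ ξ < ω₁, and let 𝒜 ⊆ Σ⁰_ξ(Z, τ) be countable. Then there exists a zero-dimensional Polish topology σ on the set Z such that τ ⊆ σ ⊆ Σ⁰_ξ(Z, τ) and 𝒜 ⊆ σ. -/

import Mathlib

open Set

/-- The additive Borel classes `Σ⁰_ξ`: `Σ⁰_1` is the open sets, and for larger `ξ`
a set is in `Σ⁰_ξ` iff it is open or a countable union of complements of sets in
lower classes `Σ⁰_{ξₙ}` with `1 ≤ ξₙ < ξ`. -/
def Sigma0 (Z : Type*) [TopologicalSpace Z] (ξ : Ordinal.{0}) : Set (Set Z) :=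
  {A | IsOpen A ∨ ∃ g : ℕ → Set Z, ∃ o : ℕ → {o : Ordinal.{0} // 1 ≤ o ∧ o < ξ},
      (∀ n, g n ∈ Sigma0 Z (o n).1) ∧ A = ⋃ n, (g n)ᶜ}
termination_by ξ
decreasing_by exact (o n).2.2

/-- A topology is zero-dimensional if the space is non-empty and there is a
base consisting of clopen sets. -/
def ZeroDimensional (Z : Type*) (t : TopologicalSpace Z) : Prop :=
  Nonempty Z ∧ ∃ b : Set (Set Z), (∀ s ∈ b, @IsClopen Z t s) ∧
    @TopologicalSpace.IsTopologicalBasis Z t b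

/-!
The sets that can be made open by refining `τ` inside `Σ⁰_ξ` are handled by induction on `ξ`. If the
complement of `B` is open in a refinement `σ ⊆ Σ⁰_η` with `η < ξ`, then declaring `B` clopen, that
is, passing from `σ` to the topological sum of `B` and `Bᶜ`, keeps the topology Polish, and every
new open set `(V ∩ B) ∪ (W \ B)` is `Σ⁰_ξ`. A `Σ⁰_ξ` set that is not already open is a countable
union of such sets `B`, and countably many Polish refinements of `τ` have a Polish supremum. The
supremum stays within `Σ⁰_ξ` because `Σ⁰_ξ` is closed under finite intersections and countable
unions.
-/

section

open TopologicalSpace Topology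

variable {Z : Type*}

/-- The union of the multiplicative Borel classes `Π⁰_η` for `1 ≤ η < ξ`, where `Π⁰_η` is encoded as
the complements of sets in `Σ⁰_η`. For `1 < ξ`, in a perfectly normal space, the countable unions of
its members make up `Σ⁰_ξ`. -/
def LowerPi0 (Z : Type*) [TopologicalSpace Z] (ξ : Ordinal.{0}) : Set (Set Z) :=
  {B | ∃ η ∈ Ico 1 ξ, Bᶜ ∈ Sigma0 Z η}

namespace Sigma0

variable {τ : TopologicalSpace Z} {η ξ : Ordinal.{0}} {A B : Set Z}

theorem mem_iff : A ∈ Sigma0 Z ξ ↔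
    IsOpen A ∨ ∃ g : ℕ → Set Z, (∀ n, g n ∈ LowerPi0 Z ξ) ∧ A = ⋃ n, g n := by
  rw [Sigma0]
  refine or_congr_right ⟨?_, ?_⟩
  · rintro ⟨g, o, hg, rfl⟩
    exact ⟨fun n => (g n)ᶜ, fun n => ⟨o n, (o n).2, (compl_compl (g n)).symm ▸ hg n⟩, rfl⟩
  · rintro ⟨g, hg, rfl⟩
    choose o ho hgo using hg
    exact ⟨fun n => (g n)ᶜ, fun n => ⟨o n, ho n⟩, hgo, by simp only [compl_compl]⟩

theorem of_isOpen (hA : IsOpen A) : A ∈ Sigma0 Z ξ :=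
  mem_iff.2 (.inl hA)

theorem mono (h : η ≤ ξ) : Sigma0 Z η ⊆ Sigma0 Z ξ := fun A hA => by
  rw [mem_iff] at hA ⊢
  refine hA.imp_right fun ⟨g, hg, hA⟩ => ⟨g, fun n => ?_, hA⟩
  obtain ⟨ζ, hζ, hgζ⟩ := hg n
  exact ⟨ζ, Ico_subset_Ico_right h hζ, hgζ⟩

theorem isOpen_of_le_one (hξ : ξ ≤ 1) (hA : A ∈ Sigma0 Z ξ) : IsOpen A := by
  rcases mem_iff.1 hA with hA | ⟨g, hg, -⟩
  · exact hA
  · obtain ⟨η, hη, -⟩ := hg 0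
    exact absurd (hη.1.trans_lt hη.2) hξ.not_gt

theorem iUnion_mem_of_lowerPi0 {ι : Type*} [Countable ι] {g : ι → Set Z}
    (hg : ∀ i, g i ∈ LowerPi0 Z ξ) : ⋃ i, g i ∈ Sigma0 Z ξ := by
  cases isEmpty_or_nonempty ι
  · simpa only [iUnion_of_empty] using of_isOpen isOpen_empty
  · obtain ⟨f, hf⟩ := exists_surjective_nat ι
    exact mem_iff.2 (.inr ⟨g ∘ f, fun n => hg (f n), (hf.iUnion_comp g).symm⟩)

theorem lowerPi0_subset : LowerPi0 Z ξ ⊆ Sigma0 Z ξ := fun B hB => by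
  simpa only [iUnion_const] using iUnion_mem_of_lowerPi0 fun _ : Unit => hB

theorem compl_mem_of_lowerPi0 (hB : B ∈ LowerPi0 Z ξ) : Bᶜ ∈ Sigma0 Z ξ :=
  let ⟨_, hη, hBη⟩ := hB
  mono hη.2.le hBη

section PerfectlyNormalSpace

variable [PerfectlyNormalSpace Z]

theorem exists_eq_iUnion_lowerPi0 (hξ : 1 < ξ) (hA : A ∈ Sigma0 Z ξ) :
    ∃ g : ℕ → Set Z, (∀ n, g n ∈ LowerPi0 Z ξ) ∧ A = ⋃ n, g n := by
  refine (mem_iff.1 hA).elim (fun hA => ?_) id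
  obtain ⟨f, hf, hAf⟩ := isGδ_iff_eq_iInter_nat.1 hA.isClosed_compl.isGδ
  refine ⟨fun n => (f n)ᶜ, fun n => ⟨1, ⟨le_rfl, hξ⟩, of_isOpen ?_⟩, ?_⟩
  · simpa only [compl_compl] using hf n
  · rw [← compl_iInter, ← hAf, compl_compl]

theorem iUnion_mem {ι : Type*} [Countable ι] {A : ι → Set Z} (hA : ∀ i, A i ∈ Sigma0 Z ξ) :
    ⋃ i, A i ∈ Sigma0 Z ξ := by
  rcases le_or_gt ξ 1 with hξ | hξ
  · exact of_isOpen (isOpen_iUnion fun i => isOpen_of_le_one hξ (hA i))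
  · choose g hg hAg using fun i => exists_eq_iUnion_lowerPi0 hξ (hA i)
    simpa only [hAg, iUnion_prod'] using iUnion_mem_of_lowerPi0 fun p : ι × ℕ => hg p.1 p.2

theorem union_mem (hA : A ∈ Sigma0 Z ξ) (hB : B ∈ Sigma0 Z ξ) : A ∪ B ∈ Sigma0 Z ξ := by
  rw [union_eq_iUnion]
  exact iUnion_mem (Bool.rec hB hA)

theorem inter_mem_lowerPi0 (hA : A ∈ LowerPi0 Z ξ) (hB : B ∈ LowerPi0 Z ξ) :
    A ∩ B ∈ LowerPi0 Z ξ := by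
  obtain ⟨η, hη, hAη⟩ := hA
  obtain ⟨ζ, hζ, hBζ⟩ := hB
  refine ⟨max η ζ, ⟨le_max_of_le_left hη.1, max_lt hη.2 hζ.2⟩, ?_⟩
  rw [compl_inter]
  exact union_mem (mono (le_max_left η ζ) hAη) (mono (le_max_right η ζ) hBζ)

theorem inter_mem (hA : A ∈ Sigma0 Z ξ) (hB : B ∈ Sigma0 Z ξ) : A ∩ B ∈ Sigma0 Z ξ := by
  rcases le_or_gt ξ 1 with hξ | hξ
  · exact of_isOpen ((isOpen_of_le_one hξ hA).inter (isOpen_of_le_one hξ hB))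
  · obtain ⟨f, hf, rfl⟩ := exists_eq_iUnion_lowerPi0 hξ hA
    obtain ⟨g, hg, rfl⟩ := exists_eq_iUnion_lowerPi0 hξ hB
    simpa only [iUnion_inter_iUnion, iUnion_prod'] using
      iUnion_mem_of_lowerPi0 fun p : ℕ × ℕ => inter_mem_lowerPi0 (hf p.1) (hg p.2)

theorem biInter_finset_mem {ι : Type*} (F : Finset ι) {A : ι → Set Z}
    (hA : ∀ i ∈ F, A i ∈ Sigma0 Z ξ) : ⋂ i ∈ F, A i ∈ Sigma0 Z ξ := by
  induction F using Finset.cons_induction with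
  | empty => simpa only [Finset.notMem_empty, iInter_of_empty, iInter_univ] using
      of_isOpen isOpen_univ
  | cons i F _ ih =>
    rw [Finset.forall_mem_cons] at hA
    simp only [Finset.mem_cons, iInter_iInter_eq_or_left]
    exact inter_mem hA.1 (ih hA.2)

theorem mem_of_isTopologicalBasis {σ : TopologicalSpace Z} [@SecondCountableTopology Z σ]
    {b : Set (Set Z)} (hb : @IsTopologicalBasis Z σ b) (hbξ : b ⊆ @Sigma0 Z τ ξ)
    (hA : IsOpen[σ] A) : A ∈ @Sigma0 Z τ ξ := by
  obtain ⟨S, hSb, rfl⟩ := hb.open_eq_sUnion hA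
  obtain ⟨T, hTc, hTS, hT⟩ := isOpen_sUnion_countable S fun s hs => hb.isOpen (hSb hs)
  have := hTc.to_subtype
  rw [← hT, sUnion_eq_iUnion]
  exact iUnion_mem fun s : T => hbξ (hSb (hTS s.2))

end PerfectlyNormalSpace

end Sigma0

/-- The topology obtained from `σ` by declaring `s` clopen, realised as the topological sum of the
subspaces `s` and `sᶜ`. -/
abbrev splitTopology (σ : TopologicalSpace Z) (s : Set Z) : TopologicalSpace Z :=
  coinduced ((↑) : s → Z) (σ.induced (↑)) ⊔ coinduced ((↑) : ↥sᶜ → Z) (σ.induced (↑))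

section splitTopology

variable {σ : TopologicalSpace Z} {s : Set Z}

theorem isOpen_splitTopology_iff {U : Set Z} : IsOpen[splitTopology σ s] U ↔
    ∃ V W, IsOpen[σ] V ∧ IsOpen[σ] W ∧ U = s.ite V W := by
  have isOpen_iff_preimage : IsOpen[splitTopology σ s] U ↔
      IsOpen ((↑) ⁻¹' U : Set s) ∧ IsOpen ((↑) ⁻¹' U : Set ↥sᶜ) :=
    Iff.rfl
  simp only [isOpen_iff_preimage, isOpen_induced_iff, Subtype.preimage_coe_eq_preimage_coe_iff]
  constructor
  · rintro ⟨⟨V, hV, hVU⟩, ⟨W, hW, hWU⟩⟩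
    refine ⟨V, W, hV, hW, ?_⟩
    rw [Set.ite, sdiff_eq, inter_comm V, inter_comm W, hVU, hWU, inter_comm s, inter_comm sᶜ,
      inter_union_compl]
  · rintro ⟨V, W, hV, hW, rfl⟩
    refine ⟨⟨V, hV, ?_⟩, ⟨W, hW, ?_⟩⟩
    · rw [inter_comm, inter_comm s, ite_inter_self]
    · rw [inter_comm, inter_comm sᶜ, ite_inter_compl_self]

theorem splitTopology_le : splitTopology σ s ≤ σ := fun U hU =>
  isOpen_splitTopology_iff.2 ⟨U, U, hU, hU, (ite_same s U).symm⟩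

theorem isClopen_splitTopology : @IsClopen Z (splitTopology σ s) s where
  left := by
    rw [← @isOpen_compl_iff, isOpen_splitTopology_iff]
    exact ⟨∅, univ, isOpen_empty, isOpen_univ, by simp [Set.ite, sdiff_eq]⟩
  right := isOpen_splitTopology_iff.2 ⟨univ, ∅, isOpen_univ, isOpen_empty, by simp [Set.ite]⟩

theorem polishSpace_splitTopology [PolishSpace Z] (hs : IsClosed s) :
    @PolishSpace Z (splitTopology σ s) := by
  classical
  have := hs.polishSpace
  have := hs.isOpen_compl.polishSpace
  have eq_coinduced :
      splitTopology σ s = coinduced (Equiv.Set.sumCompl s) instTopologicalSpaceSum := by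
    simp only [instTopologicalSpaceSum, coinduced_sup, coinduced_compose]
    rfl
  rw [eq_coinduced, ← Equiv.induced_symm]
  exact (Equiv.Set.sumCompl s).symm.polishSpace_induced

end splitTopology

namespace ZeroDimensional

theorem iff_isTopologicalBasis_isClopen {t : TopologicalSpace Z} :
    ZeroDimensional Z t ↔ Nonempty Z ∧ IsTopologicalBasis {s : Set Z | IsClopen s} :=
  and_congr_right fun _ =>
    ⟨fun ⟨_, hb, hB⟩ => hB.of_isOpen_of_subset (fun _ hs => hs.isOpen) hb,
      fun h => ⟨_, fun _ hs => hs, h⟩⟩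

protected theorem iInf {ι : Type*} [Nonempty ι] {t : ι → TopologicalSpace Z}
    (ht : ∀ i, ZeroDimensional Z (t i)) : ZeroDimensional Z (⨅ i, t i) := by
  simp only [iff_isTopologicalBasis_isClopen] at ht
  refine ⟨(ht (Classical.arbitrary ι)).1, _, ?_, IsTopologicalBasis.iInf fun i => (ht i).2⟩
  rintro _ ⟨U, F, hU, rfl⟩
  exact @isClopen_biInter_finset Z (⨅ i, t i) _ F U fun i hi =>
    ⟨(hU i hi).1.mono (iInf_le t i), (hU i hi).2.mono (iInf_le t i)⟩

protected theorem splitTopology {σ : TopologicalSpace Z} (hσ : ZeroDimensional Z σ) (s : Set Z) :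
    ZeroDimensional Z (splitTopology σ s) := by
  rw [iff_isTopologicalBasis_isClopen] at hσ ⊢
  obtain ⟨hZ, hσ⟩ := hσ
  have exists_isClopen {x : Z} {V : Set Z} (hx : x ∈ V) (hV : IsOpen[σ] V) :
      ∃ C ⊆ V, x ∈ C ∧ @IsClopen Z (splitTopology σ s) C := by
    obtain ⟨C, hC, hxC, hCV⟩ := hσ.exists_subset_of_mem_open hx hV
    exact ⟨C, hCV, hxC, hC.1.mono splitTopology_le, hC.2.mono splitTopology_le⟩
  refine ⟨hZ, @isTopologicalBasis_of_isOpen_of_nhds Z (splitTopology σ s) _ (fun C hC => hC.2) ?_⟩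
  intro x U hx hU
  obtain ⟨V, W, hV, hW, rfl⟩ := isOpen_splitTopology_iff.1 hU
  rcases hx with ⟨hxV, hxs⟩ | ⟨hxW, hxs⟩
  · obtain ⟨C, hCV, hxC, hC⟩ := exists_isClopen hxV hV
    exact ⟨C ∩ s, @IsClopen.inter Z (splitTopology σ s) _ _ hC isClopen_splitTopology, ⟨hxC, hxs⟩,
      fun y hy => .inl ⟨hCV hy.1, hy.2⟩⟩
  · obtain ⟨C, hCW, hxC, hC⟩ := exists_isClopen hxW hW
    exact ⟨C \ s, @IsClopen.diff Z (splitTopology σ s) _ _ hC isClopen_splitTopology, ⟨hxC, hxs⟩,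
      fun y hy => .inr ⟨hCW hy.1, hy.2⟩⟩

end ZeroDimensional

/-- `σ` is a Polish topology with `τ ⊆ σ ⊆ Σ⁰_ξ(Z, τ)` which is zero-dimensional whenever `τ` is. -/
structure IsSigma0Refinement (τ : TopologicalSpace Z) (ξ : Ordinal.{0}) (σ : TopologicalSpace Z) :
    Prop where
  polishSpace : @PolishSpace Z σ
  le : σ ≤ τ
  mem_sigma0 : ∀ U : Set Z, IsOpen[σ] U → U ∈ @Sigma0 Z τ ξ
  zeroDimensional : ZeroDimensional Z τ → ZeroDimensional Z σ

namespace IsSigma0Refinement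

variable {τ : TopologicalSpace Z} {ξ : Ordinal.{0}}

protected theorem refl [PolishSpace Z] : IsSigma0Refinement τ ξ τ :=
  ⟨‹_›, le_rfl, fun _ => Sigma0.of_isOpen, id⟩

protected theorem iInf [PerfectlyNormalSpace Z] {ι : Type*} [Countable ι]
    {t : ι → TopologicalSpace Z} {i₀ : ι} (hle : ∀ i, t i ≤ t i₀)
    (ht : ∀ i, IsSigma0Refinement τ ξ (t i)) :
    IsSigma0Refinement τ ξ (⨅ i, t i) := by
  have polishSpace_iInf : @PolishSpace Z (⨅ i, t i) :=
    .iInf ⟨i₀, hle⟩ fun i => (ht i).polishSpace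
  have isTopologicalBasis_iInf :=
    IsTopologicalBasis.iInf (t := t) fun i => @isTopologicalBasis_opens Z (t i)
  have : Nonempty ι := ⟨i₀⟩
  refine ⟨polishSpace_iInf, iInf_le_of_le i₀ (ht i₀).le, fun U => ?_,
    fun hτ => .iInf fun i => (ht i).zeroDimensional hτ⟩
  refine Sigma0.mem_of_isTopologicalBasis isTopologicalBasis_iInf ?_
  rintro _ ⟨V, F, hV, rfl⟩
  exact Sigma0.biInter_finset_mem F fun i hi => (ht i).mem_sigma0 _ (hV i hi)

theorem exists_forall_isOpen [PolishSpace Z] {ι : Type*} [Countable ι] {A : ι → Set Z}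
    (hA : ∀ i, ∃ σ, IsSigma0Refinement τ ξ σ ∧ IsOpen[σ] (A i)) :
    ∃ σ, IsSigma0Refinement τ ξ σ ∧ ∀ i, IsOpen[σ] (A i) := by
  choose m hm hmA using hA
  let t : Option ι → TopologicalSpace Z := fun i => i.elim τ m
  have ht : ∀ i, IsSigma0Refinement τ ξ (t i) := Option.forall.2 ⟨.refl, hm⟩
  exact ⟨⨅ i, t i, .iInf (i₀ := none) (fun i => (ht i).le) ht,
    fun i => (hmA i).mono (iInf_le t (some i))⟩

protected theorem splitTopology [PerfectlyNormalSpace Z] {σ : TopologicalSpace Z}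
    {η : Ordinal.{0}} (hσ : IsSigma0Refinement τ η σ) (hη : η ∈ Ico 1 ξ) {s : Set Z}
    (hs : IsClosed[σ] s) :
    IsSigma0Refinement τ ξ (splitTopology σ s) where
  polishSpace := @polishSpace_splitTopology Z σ s hσ.polishSpace hs
  le := splitTopology_le.trans hσ.le
  mem_sigma0 U hU := by
    obtain ⟨V, W, hV, hW, rfl⟩ := isOpen_splitTopology_iff.1 hU
    have hs : s ∈ @LowerPi0 Z τ ξ := ⟨η, hη, hσ.mem_sigma0 _ hs.isOpen_compl⟩
    have mem {V : Set Z} (hV : IsOpen[σ] V) : V ∈ @Sigma0 Z τ ξ :=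
      Sigma0.mono hη.2.le (hσ.mem_sigma0 V hV)
    exact Sigma0.union_mem (Sigma0.inter_mem (mem hV) (Sigma0.lowerPi0_subset hs))
      (Sigma0.inter_mem (mem hW) (Sigma0.compl_mem_of_lowerPi0 hs))
  zeroDimensional hτ := (hσ.zeroDimensional hτ).splitTopology s

theorem exists_isOpen [PolishSpace Z] {A : Set Z} (hA : A ∈ Sigma0 Z ξ) :
    ∃ σ, IsSigma0Refinement τ ξ σ ∧ IsOpen[σ] A := by
  induction ξ using WellFoundedLT.induction generalizing A with
  | ind ξ ih =>
  rcases Sigma0.mem_iff.1 hA with hA | ⟨g, hg, rfl⟩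
  · exact ⟨τ, .refl, hA⟩
  · suffices ∀ n, ∃ σ, IsSigma0Refinement τ ξ σ ∧ IsOpen[σ] (g n) by
      obtain ⟨σ, hσ, hgσ⟩ := exists_forall_isOpen this
      exact ⟨σ, hσ, isOpen_iUnion hgσ⟩
    intro n
    obtain ⟨η, hη, hgη⟩ := hg n
    obtain ⟨σ, hσ, hgσ⟩ := ih η hη.2 hgη
    have hgσ : IsClosed[σ] (g n) := ⟨hgσ⟩
    exact ⟨splitTopology σ (g n), hσ.splitTopology hη hgσ, isClopen_splitTopology.2⟩

end IsSigma0Refinement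

theorem stmt11_general (τ : TopologicalSpace Z) [PolishSpace Z] (ξ : Ordinal.{0})
    {𝒜 : Set (Set Z)} (h𝒜c : 𝒜.Countable) (h𝒜 : 𝒜 ⊆ Sigma0 Z ξ) :
    ∃ σ, IsSigma0Refinement τ ξ σ ∧ ∀ A ∈ 𝒜, IsOpen[σ] A := by
  have := h𝒜c.to_subtype
  simpa only [Subtype.forall] using
    IsSigma0Refinement.exists_forall_isOpen fun A : 𝒜 => IsSigma0Refinement.exists_isOpen (h𝒜 A.2)

end

/-- Kuratowski's transfer theorem. Let `(Z, τ)` be a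
zero-dimensional Polish space, `1 ≤ ξ < ω₁`, and `𝒜 ⊆ Σ⁰_ξ(Z, τ)` countable.
Then there is a zero-dimensional Polish topology `σ` on `Z` with
`τ ⊆ σ ⊆ Σ⁰_ξ(Z, τ)` and `𝒜 ⊆ σ`. -/
theorem stmt11 {Z : Type*} (τ : TopologicalSpace Z) (hPolish : @PolishSpace Z τ)
    (hzd : ZeroDimensional Z τ) (ξ : Ordinal.{0}) (hξ1 : 1 ≤ ξ)
    (hξc : ξ.card ≤ Cardinal.aleph0) (𝒜 : Set (Set Z)) (h𝒜c : 𝒜.Countable)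
    (h𝒜 : 𝒜 ⊆ @Sigma0 Z τ ξ) :
    ∃ σ : TopologicalSpace Z, @PolishSpace Z σ ∧ ZeroDimensional Z σ ∧
      (∀ U : Set Z, @IsOpen Z τ U → @IsOpen Z σ U) ∧
      (∀ U : Set Z, @IsOpen Z σ U → U ∈ @Sigma0 Z τ ξ) ∧
      (∀ A ∈ 𝒜, @IsOpen Z σ A) := by
  obtain ⟨σ, hσ, h𝒜σ⟩ := stmt11_general τ ξ h𝒜c h𝒜
  exact ⟨σ, hσ.polishSpace, hσ.zeroDimensional hzd, fun _ hU => hU.mono hσ.le, hσ.mem_sigma0, h𝒜σ⟩
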